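/- Summing the jacket face counts over all cyclic permutations of the colors recovers the total face count: for any (D+1)-tuple σ of permutations of {1,…,k}, Σ_π F_π(σ) = 2·(D−1)!·F(σ), where the sum runs over all D! cyclic permutations π of the color set {0,1,…,D}. -/

import Mathlib

/-!
Since `π` is a single cycle through all colors, `F_π(σ)` is the sum over all colors `a` of the
number of cycles of `σ⁽ᵃ⁾ ∘ (σ⁽ᵇ⁾)⁻¹`, where `b = π a`. Conjugating by transpositions that fix `a`
shows that the `D!` cyclic permutations are spread evenly over the `D` possible values of `π a`, so
every ordered pair of distinct colors is consecutive in exactly `(D - 1)!` of them. Inverting a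
permutation preserves its number of cycles, so each unordered pair of colors is counted twice.
-/

/-- Number of cycles of a permutation counting fixed points: the number of orbits
on `Fin k` of the cyclic group generated by `τ`. -/
noncomputable def cycleCount {k : ℕ} (τ : Equiv.Perm (Fin k)) : ℕ :=
  Nat.card (MulAction.orbitRel.Quotient (Subgroup.zpowers τ) (Fin k))

/-- Total number of faces of the `(D+1)`-colored graph encoded by `σ`:
`F(σ) = Σ_{c₁ < c₂} c(σ⁽ᶜ¹⁾ ∘ (σ⁽ᶜ²⁾)⁻¹)`. -/
noncomputable def faceCount {k D : ℕ} (σ : Fin (D + 1) → Equiv.Perm (Fin k)) : ℕ :=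
  ∑ p ∈ Finset.univ.filter (fun p : Fin (D + 1) × Fin (D + 1) => p.1 < p.2),
    cycleCount (σ p.1 * (σ p.2)⁻¹)

/-- Number of connected components of the `(D+1)`-colored graph encoded by `σ`:
the number of orbits on `Fin k` of the subgroup generated by `(σ⁽⁰⁾)⁻¹ ∘ σ⁽ᶜ⁾`, `1 ≤ c ≤ D`. -/
noncomputable def compCount {k D : ℕ} (σ : Fin (D + 1) → Equiv.Perm (Fin k)) : ℕ :=
  Nat.card (MulAction.orbitRel.Quotient
    (Subgroup.closure
      {g : Equiv.Perm (Fin k) | ∃ c : Fin (D + 1), c ≠ 0 ∧ g = (σ 0)⁻¹ * σ c}) (Fin k))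

/-- Face count of the jacket associated to the cyclic color permutation `π`:
`F_π(σ) = Σ_{q=0}^{D} c(σ^{(π^q(0))} ∘ (σ^{(π^{q+1}(0))})⁻¹)`. -/
noncomputable def jacketFaceCount {k D : ℕ} (σ : Fin (D + 1) → Equiv.Perm (Fin k))
    (π : Equiv.Perm (Fin (D + 1))) : ℕ :=
  ∑ q ∈ Finset.range (D + 1),
    cycleCount (σ ((π ^ q) 0) * (σ ((π ^ (q + 1)) 0))⁻¹)

section Permutations

open Finset Equiv Equiv.Perm

variable {α M : Type*} [AddCommMonoid M]

lemma sum_range_pow_apply_of_isCycleOn {π : Perm α} {s : Finset α} (hπ : π.IsCycleOn s)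
    {a : α} (ha : a ∈ s) (f : α → M) :
    ∑ q ∈ range #s, f ((π ^ q) a) = ∑ b ∈ s, f b := by
  refine sum_nbij (fun q ↦ (π ^ q) a) ?_ ?_ ?_ fun _ _ ↦ rfl
  · exact fun q _ ↦ hπ.1.mapsTo.perm_pow q ha
  · intro q hq r hr hqr
    have hmod : q ≡ r [MOD #s] := (hπ.pow_apply_eq_pow_apply ha).1 hqr
    exact hmod.eq_of_lt_of_lt (mem_range.1 hq) (mem_range.1 hr)
  · intro b hb
    obtain ⟨q, hq, hqb⟩ := hπ.exists_pow_eq ha hb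
    exact ⟨q, mem_range.2 hq, hqb⟩

lemma sum_offDiag_eq_two_nsmul_sum_lt [LinearOrder α] (s : Finset α) (g : α → α → M)
    (hg : ∀ a b, g a b = g b a) :
    ∑ p ∈ s.offDiag, g p.1 p.2 = 2 • ∑ p ∈ s ×ˢ s with p.1 < p.2, g p.1 p.2 := by
  have hlt : {p ∈ s.offDiag | p.1 < p.2} = {p ∈ s ×ˢ s | p.1 < p.2} := by grind
  have hgt : ∑ p ∈ s.offDiag with ¬p.1 < p.2, g p.1 p.2 =
      ∑ p ∈ s ×ˢ s with p.1 < p.2, g p.1 p.2 :=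
    sum_nbij' Prod.swap Prod.swap (by grind) (by grind) (fun _ _ ↦ Prod.swap_swap _)
      (fun _ _ ↦ Prod.swap_swap _) fun p _ ↦ hg p.1 p.2
  rw [← sum_filter_add_sum_filter_not _ (fun p ↦ p.1 < p.2), hlt, hgt, two_nsmul]

variable [DecidableEq α]

lemma card_filter_apply_eq_of_conj {S : Finset (Perm α)}
    (hS : ∀ ρ, ∀ π ∈ S, ρ * π * ρ⁻¹ ∈ S) (ρ : Perm α) (a b : α) :
    #{π ∈ S | π a = b} = #{π ∈ S | π (ρ a) = ρ b} := by
  refine card_nbij' (fun π ↦ ρ * π * ρ⁻¹) (fun π ↦ ρ⁻¹ * π * ρ) ?_ ?_ ?_ ?_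
  · intro π hπ
    have ⟨hmem, hab⟩ := mem_filter.1 hπ
    exact mem_filter.2 ⟨hS ρ π hmem, by simp [hab]⟩
  · intro π hπ
    have ⟨hmem, hab⟩ := mem_filter.1 hπ
    exact mem_filter.2 ⟨by simpa using hS ρ⁻¹ π hmem, by simp [hab]⟩
  · exact fun π _ ↦ by group
  · exact fun π _ ↦ by group

variable [Fintype α]

lemma card_sub_one_mul_card_filter_apply_eq_of_conj {S : Finset (Perm α)}
    (hS : ∀ ρ, ∀ π ∈ S, ρ * π * ρ⁻¹ ∈ S) {a b : α} (hfix : ∀ π ∈ S, π a ≠ a) (hb : b ≠ a) :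
    (Fintype.card α - 1) * #{π ∈ S | π a = b} = #S := by
  have huniform : ∀ c ∈ univ.erase a, #{π ∈ S | π a = c} = #{π ∈ S | π a = b} := by
    intro c hc
    have hca : c ≠ a := ne_of_mem_erase hc
    rw [card_filter_apply_eq_of_conj hS (swap c b), swap_apply_left,
      swap_apply_of_ne_of_ne hca.symm hb.symm]
  rw [card_eq_sum_card_fiberwise (f := fun π ↦ π a) (t := univ.erase a)
      fun π hπ ↦ mem_erase.2 ⟨hfix π hπ, mem_univ _⟩,
    sum_congr rfl huniform, sum_const, card_erase_of_mem (mem_univ a), card_univ, smul_eq_mul]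

lemma sum_sum_apply_eq_nsmul_sum_offDiag {S : Finset (Perm α)} {m : ℕ}
    (hfix : ∀ π ∈ S, ∀ a, π a ≠ a) (hm : ∀ a b, a ≠ b → #{π ∈ S | π a = b} = m)
    (g : α → α → M) :
    ∑ π ∈ S, ∑ a, g a (π a) = m • ∑ p ∈ univ.offDiag, g p.1 p.2 := by
  have hfiber (a : α) : ∑ π ∈ S, g a (π a) = ∑ b ∈ univ.erase a, m • g a b := by
    rw [← sum_fiberwise_of_maps_to' (t := univ.erase a)
      fun π hπ ↦ mem_erase.2 ⟨hfix π hπ a, mem_univ _⟩]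
    refine sum_congr rfl fun b hb ↦ ?_
    rw [sum_const, hm a b (ne_of_mem_erase hb).symm]
  rw [sum_comm, sum_congr rfl fun a _ ↦ hfiber a, smul_sum]
  exact (sum_finset_product' _ _ _ fun p ↦ by simp [eq_comm]).symm

variable (α) in
/-- The permutations of `α` consisting of a single cycle through all of `α`. Prescribing the cycle
type makes this finset empty when `α` is a subsingleton, in accordance with `Equiv.Perm.IsCycle`. -/
def cyclicPerms : Finset (Perm α) := {π | π.cycleType = {Fintype.card α}}

lemma mem_cyclicPerms {π : Perm α} : π ∈ cyclicPerms α ↔ π.IsCycle ∧ π.support = univ := by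
  rw [cyclicPerms, mem_filter_univ]
  constructor
  · intro hπ
    have hcard : #π.support = Fintype.card α := by
      rw [← sum_cycleType, hπ, Multiset.sum_singleton]
    exact ⟨card_cycleType_eq_one.1 (by rw [hπ, Multiset.card_singleton]),
      (card_eq_iff_eq_univ _).1 hcard⟩
  · rintro ⟨hcycle, hsupp⟩
    rw [hcycle.cycleType, hsupp, card_univ]

lemma card_cyclicPerms (hα : 2 ≤ Fintype.card α) :
    #(cyclicPerms α) = (Fintype.card α - 1).factorial := by
  rw [cyclicPerms, card_of_cycleType_singleton hα le_rfl, Nat.choose_self, mul_one]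

lemma conj_mem_cyclicPerms (ρ : Perm α) {π : Perm α} (hπ : π ∈ cyclicPerms α) :
    ρ * π * ρ⁻¹ ∈ cyclicPerms α := by
  rw [cyclicPerms, mem_filter_univ] at hπ ⊢
  rw [cycleType_conj, hπ]

lemma apply_ne_self_of_mem_cyclicPerms {π : Perm α} (hπ : π ∈ cyclicPerms α) (a : α) :
    π a ≠ a := by
  rw [← mem_support, (mem_cyclicPerms.1 hπ).2]
  exact mem_univ a

lemma isCycleOn_univ_of_mem_cyclicPerms {π : Perm α} (hπ : π ∈ cyclicPerms α) :
    π.IsCycleOn (univ : Finset α) := by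
  obtain ⟨hcycle, hsupp⟩ := mem_cyclicPerms.1 hπ
  rw [← hsupp, coe_support_eq_set_support]
  exact hcycle.isCycleOn

lemma card_filter_cyclicPerms_apply_eq {a b : α} (hab : a ≠ b) :
    #{π ∈ cyclicPerms α | π a = b} = (Fintype.card α - 2).factorial := by
  have hα : 2 ≤ Fintype.card α := Fintype.one_lt_card_iff.2 ⟨a, b, hab⟩
  have hmul := card_sub_one_mul_card_filter_apply_eq_of_conj
    (fun ρ _ ↦ conj_mem_cyclicPerms ρ)
    (fun _ hπ ↦ apply_ne_self_of_mem_cyclicPerms hπ a) hab.symm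
  rw [card_cyclicPerms hα, ← Nat.mul_factorial_pred (by lia)] at hmul
  exact Nat.eq_of_mul_eq_mul_left (by lia) hmul

lemma sum_cyclicPerms_sum_apply (g : α → α → M) :
    ∑ π ∈ cyclicPerms α, ∑ a, g a (π a) =
      (Fintype.card α - 2).factorial • ∑ p ∈ univ.offDiag, g p.1 p.2 :=
  sum_sum_apply_eq_nsmul_sum_offDiag (fun _ ↦ apply_ne_self_of_mem_cyclicPerms)
    (fun _ _ ↦ card_filter_cyclicPerms_apply_eq) g

end Permutations

section Faces

variable {k D : ℕ}

lemma cycleCount_inv (τ : Equiv.Perm (Fin k)) : cycleCount τ⁻¹ = cycleCount τ := by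
  rw [cycleCount, cycleCount, Subgroup.zpowers_inv]

lemma cycleCount_mul_inv_comm (τ υ : Equiv.Perm (Fin k)) :
    cycleCount (τ * υ⁻¹) = cycleCount (υ * τ⁻¹) := by
  rw [← cycleCount_inv, mul_inv_rev, inv_inv]

variable (σ : Fin (D + 1) → Equiv.Perm (Fin k))

lemma sum_offDiag_cycleCount_eq_two_mul_faceCount :
    ∑ p ∈ Finset.univ.offDiag, cycleCount (σ p.1 * (σ p.2)⁻¹) = 2 * faceCount σ := by
  rw [sum_offDiag_eq_two_nsmul_sum_lt _ (fun a b ↦ cycleCount (σ a * (σ b)⁻¹))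
    fun a b ↦ cycleCount_mul_inv_comm (σ a) (σ b), Finset.univ_product_univ, smul_eq_mul, faceCount]

lemma jacketFaceCount_eq_sum_apply {π : Equiv.Perm (Fin (D + 1))}
    (hπ : π ∈ cyclicPerms (Fin (D + 1))) :
    jacketFaceCount σ π = ∑ a, cycleCount (σ a * (σ (π a))⁻¹) := by
  have hcycle := isCycleOn_univ_of_mem_cyclicPerms hπ
  rw [← sum_range_pow_apply_of_isCycleOn hcycle (Finset.mem_univ 0), Finset.card_fin]
  simp only [jacketFaceCount, pow_succ', Equiv.Perm.mul_apply]

end Faces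

open scoped Classical in
/-- Summing the jacket face counts over all cyclic permutations of the colors recovers
the total face count: `Σ_π F_π(σ) = 2·(D−1)!·F(σ)`. -/
theorem sum_jacket_faces (k D : ℕ) (hk : 1 ≤ k) (hD : 2 ≤ D)
    (σ : Fin (D + 1) → Equiv.Perm (Fin k)) :
    ∑ π ∈ Finset.univ.filter
        (fun π : Equiv.Perm (Fin (D + 1)) => π.IsCycle ∧ π.support = Finset.univ),
      jacketFaceCount σ π = 2 * Nat.factorial (D - 1) * faceCount σ := by
  calc
    _ = ∑ π ∈ cyclicPerms (Fin (D + 1)), jacketFaceCount σ π :=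
      Finset.sum_congr (by ext π; rw [mem_cyclicPerms, Finset.mem_filter_univ]) fun _ _ ↦ rfl
    _ = ∑ π ∈ cyclicPerms (Fin (D + 1)), ∑ a, cycleCount (σ a * (σ (π a))⁻¹) :=
      Finset.sum_congr rfl fun _ ↦ jacketFaceCount_eq_sum_apply σ
    _ = (D - 1).factorial * ∑ p ∈ Finset.univ.offDiag, cycleCount (σ p.1 * (σ p.2)⁻¹) := by
      rw [sum_cyclicPerms_sum_apply fun a b ↦ cycleCount (σ a * (σ b)⁻¹), Fintype.card_fin,
        smul_eq_mul, Nat.add_sub_add_right D 1 1]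
    _ = 2 * (D - 1).factorial * faceCount σ := by
      rw [sum_offDiag_cycleCount_eq_two_mul_faceCount]
      ring
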